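/- Fix t1, t2 > 0. Then the limit as N → ∞ of (1/N) · ∫_0^{N/t1} dx1 ∫_0^{N/t2} dx2 ∫_0^2 dτ ∫_ℝ dy · p_{N^τ/(t1∧t2) - 1/t1}(y + x2 - x1) · p_{N^τ/(t1∧t2) - 1/t2}(y) · min(1, |N^{-τ} y|^{1/2}) equals 0. -/

import Mathlib

open MeasureTheory Real Filter

/-- The heat kernel `p_t(x) = (2πt)^{-1/2} exp(-x²/(2t))`. -/
noncomputable def heatKernel (t x : ℝ) : ℝ :=
  Real.exp (-x ^ 2 / (2 * t)) / Real.sqrt (2 * Real.pi * t)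

/-!
Enlarging the range of `x₂` to all of `ℝ` costs only an upper bound, and by Tonelli and translation
invariance the first heat kernel then integrates to `1`, uniformly in `x₁`. What remains is the
weight averaged against a centred Gaussian of variance at most `N ^ τ / a`, where `a = min t₁ t₂`.
A weight bounded by `C * |N ^ (-τ) * y| ^ p` has, by scaling, an average of order
`(N ^ (-τ) * √(N ^ τ / a)) ^ p = √a ^ (-p) * N ^ (-(p / 2) * τ)`, whose integral over `τ > 0` is of
order `1 / log N`. The average over `x₁` preserves this bound.
-/

open ProbabilityTheory Set
open scoped ENNReal NNReal Interval

section Integration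

lemma enorm_intervalIntegral_le_lintegral_enorm {E : Type*} [NormedAddCommGroup E]
    [NormedSpace ℝ E] (f : ℝ → E) (a b : ℝ) (μ : Measure ℝ) :
    ‖∫ x in a..b, f x ∂μ‖ₑ ≤ ∫⁻ x in Ι a b, ‖f x‖ₑ ∂μ := by
  rw [← ofReal_norm, intervalIntegral.norm_intervalIntegral_eq, ofReal_norm]
  exact enorm_integral_le_lintegral_enorm _

lemma lintegral_lintegral_lintegral_translate_mul {α G : Type*} [MeasurableSpace α]
    [MeasurableSpace G] [AddCommGroup G] [MeasurableAdd₂ G] {μ : Measure α} [SFinite μ]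
    {ν : Measure G} [SFinite ν] [ν.IsAddLeftInvariant] {f g : α → G → ℝ≥0∞}
    (hf : Measurable (Function.uncurry f)) (hg : Measurable (Function.uncurry g)) (c : G) :
    ∫⁻ x, ∫⁻ τ, ∫⁻ y, f τ (y + x - c) * g τ y ∂ν ∂μ ∂ν =
      ∫⁻ τ, (∫⁻ x, f τ x ∂ν) * ∫⁻ y, g τ y ∂ν ∂μ := by
  have hfg : Measurable fun q : (G × α) × G ↦ f q.1.2 (q.2 + q.1.1 - c) * g q.1.2 q.2 := by
    simp only [sub_eq_add_neg]
    fun_prop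
  rw [lintegral_lintegral_swap hfg.lintegral_prod_right'.aemeasurable]
  refine lintegral_congr fun τ ↦ ?_
  have translate (y : G) : ∫⁻ x, f τ (y + x - c) ∂ν = ∫⁻ x, f τ x ∂ν := by
    simpa only [sub_add_eq_add_sub] using lintegral_add_left_eq_self (μ := ν) (f τ) (y - c)
  calc ∫⁻ x, ∫⁻ y, f τ (y + x - c) * g τ y ∂ν ∂ν
      = ∫⁻ y, ∫⁻ x, f τ (y + x - c) * g τ y ∂ν ∂ν :=
        lintegral_lintegral_swap
          (hfg.comp (g := fun q : (G × α) × G ↦ f q.1.2 (q.2 + q.1.1 - c) * g q.1.2 q.2)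
            (f := fun q : G × G ↦ ((q.1, τ), q.2)) (by fun_prop)).aemeasurable
    _ = ∫⁻ y, (∫⁻ x, f τ x ∂ν) * g τ y ∂ν := by
        refine lintegral_congr fun y ↦ ?_
        rw [lintegral_mul_const _ (by simp only [sub_eq_add_neg]; fun_prop), translate]
    _ = (∫⁻ x, f τ x ∂ν) * ∫⁻ y, g τ y ∂ν := lintegral_const_mul _ (by fun_prop)

lemma lintegral_ofReal_const_mul_exp_neg_mul_Ioi {K b : ℝ} (hK : 0 ≤ K) (hb : 0 < b) :
    ∫⁻ τ in Ioi (0 : ℝ), .ofReal (K * exp (-b * τ)) = .ofReal (K / b) := by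
  have hb' : -b < 0 := neg_lt_zero.mpr hb
  rw [← ofReal_integral_eq_lintegral_ofReal ((integrableOn_exp_mul_Ioi hb' 0).const_mul K)
    (.of_forall fun τ ↦ by positivity), integral_const_mul, integral_exp_mul_Ioi hb' 0]
  simp [div_eq_mul_inv]

end Integration

section Gaussian

lemma integrable_abs_rpow_gaussianReal {p : ℝ} (hp : 0 ≤ p) (m : ℝ) (v : ℝ≥0) :
    Integrable (fun y ↦ |y| ^ p) (gaussianReal m v) := by
  lift p to ℝ≥0 using hp
  exact (memLp_id_gaussianReal (μ := m) (v := v) p).integrable_norm_rpow'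

lemma integral_abs_rpow_gaussianReal (p : ℝ) (v : ℝ≥0) :
    ∫ y, |y| ^ p ∂gaussianReal 0 v = √v ^ p * ∫ z, |z| ^ p ∂gaussianReal 0 1 := by
  have hmap : (gaussianReal 0 1).map (√v * ·) = gaussianReal 0 v := by
    rw [gaussianReal_map_const_mul, mul_zero, mul_one]
    congr 1
    exact NNReal.eq (sq_sqrt v.coe_nonneg)
  rw [← hmap, integral_map (by fun_prop) (Measurable.aestronglyMeasurable (by fun_prop)),
    ← integral_const_mul]
  refine integral_congr_ae (.of_forall fun z ↦ ?_)
  simp only [abs_mul, abs_of_nonneg (sqrt_nonneg _),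
    mul_rpow (sqrt_nonneg _) (abs_nonneg _)]

end Gaussian

section HeatKernel

lemma heatKernel_eq_gaussianPDFReal {t : ℝ} (ht : 0 ≤ t) (x : ℝ) :
    heatKernel t x = gaussianPDFReal 0 t.toNNReal x := by
  rw [heatKernel, gaussianPDFReal, coe_toNNReal t ht, sub_zero, div_eq_inv_mul]

lemma enorm_heatKernel {t : ℝ} (ht : 0 ≤ t) (x : ℝ) :
    ‖heatKernel t x‖ₑ = gaussianPDF 0 t.toNNReal x := by
  rw [heatKernel_eq_gaussianPDFReal ht, enorm_of_nonneg (gaussianPDFReal_nonneg _ _ _),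
    gaussianPDF]

@[fun_prop]
lemma measurable_uncurry_heatKernel : Measurable (Function.uncurry heatKernel) := by
  unfold heatKernel Function.uncurry
  fun_prop

lemma lintegral_enorm_heatKernel {t : ℝ} (ht : 0 < t) : ∫⁻ x, ‖heatKernel t x‖ₑ = 1 := by
  simp only [enorm_heatKernel ht.le]
  exact lintegral_gaussianPDF_eq_one 0 (toNNReal_pos.mpr ht).ne'

lemma lintegral_enorm_heatKernel_mul {t : ℝ} (ht : 0 < t) {f : ℝ → ℝ} (hf : Measurable f) :
    ∫⁻ y, ‖heatKernel t y * f y‖ₑ = ∫⁻ y, ‖f y‖ₑ ∂gaussianReal 0 t.toNNReal := by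
  rw [gaussianReal_of_var_ne_zero _ (toNNReal_pos.mpr ht).ne',
    lintegral_withDensity_eq_lintegral_mul _ (measurable_gaussianPDF _ _) hf.enorm]
  simp only [enorm_mul, enorm_heatKernel ht.le, Pi.mul_apply]

lemma lintegral_enorm_heatKernel_mul_comp_mul_le {t p C : ℝ} (ht : 0 < t) (hp : 0 ≤ p)
    {φ : ℝ → ℝ} (hφ : Measurable φ) (hφC : ∀ z, |φ z| ≤ C * |z| ^ p) (c : ℝ) :
    ∫⁻ y, ‖heatKernel t y * φ (c * y)‖ₑ ≤
      .ofReal (C * (∫ z, |z| ^ p ∂gaussianReal 0 1) * (|c| * √t) ^ p) := by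
  have hC : 0 ≤ C := (abs_nonneg _).trans (by simpa using hφC 1)
  calc ∫⁻ y, ‖heatKernel t y * φ (c * y)‖ₑ
      = ∫⁻ y, ‖φ (c * y)‖ₑ ∂gaussianReal 0 t.toNNReal :=
        lintegral_enorm_heatKernel_mul ht (by fun_prop)
    _ ≤ ∫⁻ y, .ofReal (C * |c| ^ p * |y| ^ p) ∂gaussianReal 0 t.toNNReal := by
        refine lintegral_mono fun y ↦ ?_
        rw [enorm_eq_ofReal_abs, mul_assoc, ← mul_rpow (abs_nonneg _) (abs_nonneg _), ← abs_mul]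
        exact ENNReal.ofReal_le_ofReal (hφC _)
    _ = .ofReal (C * |c| ^ p * ∫ y, |y| ^ p ∂gaussianReal 0 t.toNNReal) := by
        rw [← ofReal_integral_eq_lintegral_ofReal
          ((integrable_abs_rpow_gaussianReal hp _ _).const_mul _)
          (.of_forall fun y ↦ by positivity), integral_const_mul]
    _ = .ofReal (C * (∫ z, |z| ^ p ∂gaussianReal 0 1) * (|c| * √t) ^ p) := by
        rw [integral_abs_rpow_gaussianReal, coe_toNNReal _ ht.le,
          mul_rpow (abs_nonneg _) (sqrt_nonneg _)]
        ring_nf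

lemma enorm_integral_heatKernel_translate_mul_le {v₁ v₂ : ℝ → ℝ} {w : ℝ → ℝ → ℝ}
    (hv₁ : Measurable v₁) (hv₂ : Measurable v₂) (hw : Measurable (Function.uncurry w)) {S T : ℝ}
    (hpos : ∀ τ ∈ Ι S T, 0 < v₁ τ) (a b c : ℝ) :
    ‖∫ x in a..b, ∫ τ in S..T, ∫ y,
        heatKernel (v₁ τ) (y + x - c) * heatKernel (v₂ τ) y * w τ y‖ₑ ≤
      ∫⁻ τ in Ι S T, ∫⁻ y, ‖heatKernel (v₂ τ) y * w τ y‖ₑ := by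
  have hf : Measurable (Function.uncurry fun τ x ↦ ‖heatKernel (v₁ τ) x‖ₑ) := by
    fun_prop
  have hg : Measurable (Function.uncurry fun τ y ↦ ‖heatKernel (v₂ τ) y * w τ y‖ₑ) := by
    fun_prop
  calc ‖∫ x in a..b, ∫ τ in S..T, ∫ y,
          heatKernel (v₁ τ) (y + x - c) * heatKernel (v₂ τ) y * w τ y‖ₑ
      ≤ ∫⁻ x in Ι a b, ∫⁻ τ in Ι S T, ∫⁻ y,
          ‖heatKernel (v₁ τ) (y + x - c) * heatKernel (v₂ τ) y * w τ y‖ₑ :=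
        (enorm_intervalIntegral_le_lintegral_enorm _ _ _ _).trans <| lintegral_mono fun x ↦
          (enorm_intervalIntegral_le_lintegral_enorm _ _ _ _).trans <| lintegral_mono fun τ ↦
            enorm_integral_le_lintegral_enorm _
    _ ≤ ∫⁻ x, ∫⁻ τ in Ι S T, ∫⁻ y,
          ‖heatKernel (v₁ τ) (y + x - c) * heatKernel (v₂ τ) y * w τ y‖ₑ :=
        setLIntegral_le_lintegral _ _
    _ = ∫⁻ τ in Ι S T, (∫⁻ x, ‖heatKernel (v₁ τ) x‖ₑ) *
          ∫⁻ y, ‖heatKernel (v₂ τ) y * w τ y‖ₑ := by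
        rw [← lintegral_lintegral_lintegral_translate_mul hf hg c]
        simp only [mul_assoc, enorm_mul]
    _ = ∫⁻ τ in Ι S T, ∫⁻ y, ‖heatKernel (v₂ τ) y * w τ y‖ₑ :=
        setLIntegral_congr_fun measurableSet_uIoc fun τ hτ ↦ by
          simp only [lintegral_enorm_heatKernel (hpos τ hτ), one_mul]

end HeatKernel

section Rescaling

variable {N a t : ℝ}

lemma rpow_div_sub_one_div_pos (hN : 1 < N) (ha : 0 < a) (hat : a ≤ t) {τ : ℝ} (hτ : 0 < τ) :
    0 < N ^ τ / a - 1 / t :=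
  sub_pos.mpr <| calc
    1 / t ≤ 1 / a := one_div_le_one_div_of_le ha hat
    _ < N ^ τ / a := by gcongr; exact one_lt_rpow hN hτ

lemma abs_rpow_neg_mul_sqrt_rpow_le {p : ℝ} (hN : 0 < N) (ha : 0 < a) (ht : 0 ≤ t) (hp : 0 ≤ p)
    (τ : ℝ) :
    (|N ^ (-τ)| * √(N ^ τ / a - 1 / t)) ^ p ≤ √a ^ (-p) * exp (-(p / 2 * log N) * τ) := by
  have hsqrt : √(N ^ τ) = exp (log N * τ / 2) := by rw [rpow_def_of_pos hN, exp_half]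
  calc (|N ^ (-τ)| * √(N ^ τ / a - 1 / t)) ^ p
      ≤ (|N ^ (-τ)| * √(N ^ τ / a)) ^ p := by
        gcongr
        exact sub_le_self _ (one_div_nonneg.mpr ht)
    _ = ((√a)⁻¹ * exp (-(log N * τ / 2))) ^ p := by
        rw [abs_of_pos (rpow_pos_of_pos hN _), sqrt_div' _ ha.le, hsqrt, rpow_def_of_pos hN,
          div_eq_inv_mul, mul_left_comm, ← exp_add]
        ring_nf
    _ = √a ^ (-p) * exp (-(p / 2 * log N) * τ) := by
        rw [mul_rpow (by positivity) (exp_pos _).le, inv_rpow (sqrt_nonneg a),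
          rpow_neg (sqrt_nonneg a), ← exp_mul]
        ring_nf

lemma norm_integral_heatKernel_rescaled_le {t₁ t₂ T p C : ℝ} {φ : ℝ → ℝ} (hN : 1 < N)
    (ha : 0 < a) (hat₁ : a ≤ t₁) (hat₂ : a ≤ t₂) (hT : 0 ≤ T) (hp : 0 < p) (hφ : Measurable φ)
    (hφC : ∀ z, |φ z| ≤ C * |z| ^ p) (b x₁ : ℝ) :
    ‖∫ x₂ in (0 : ℝ)..b, ∫ τ in (0 : ℝ)..T, ∫ y,
        heatKernel (N ^ τ / a - 1 / t₁) (y + x₂ - x₁) * heatKernel (N ^ τ / a - 1 / t₂) y *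
          φ (N ^ (-τ) * y)‖ ≤
      C * (∫ z, |z| ^ p ∂gaussianReal 0 1) * √a ^ (-p) / (p / 2 * log N) := by
  have hN₀ : 0 < N := one_pos.trans hN
  have hlog : 0 < log N := log_pos hN
  have hC : 0 ≤ C := (abs_nonneg _).trans (by simpa using hφC 1)
  rw [← ENNReal.ofReal_le_ofReal_iff (by positivity), ofReal_norm]
  set K := C * (∫ z, |z| ^ p ∂gaussianReal 0 1) * √a ^ (-p)
  calc ‖∫ x₂ in (0 : ℝ)..b, ∫ τ in (0 : ℝ)..T, ∫ y,
          heatKernel (N ^ τ / a - 1 / t₁) (y + x₂ - x₁) * heatKernel (N ^ τ / a - 1 / t₂) y *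
            φ (N ^ (-τ) * y)‖ₑ
      ≤ ∫⁻ τ in Ι 0 T, ∫⁻ y, ‖heatKernel (N ^ τ / a - 1 / t₂) y * φ (N ^ (-τ) * y)‖ₑ :=
        enorm_integral_heatKernel_translate_mul_le (w := fun τ y ↦ φ (N ^ (-τ) * y))
          (by fun_prop) (by fun_prop) (by fun_prop)
          (fun τ hτ ↦ rpow_div_sub_one_div_pos hN ha hat₁ (uIoc_of_le hT ▸ hτ).1) _ _ _
    _ ≤ ∫⁻ τ in Ι 0 T, .ofReal (K * exp (-(p / 2 * log N) * τ)) := by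
        refine setLIntegral_mono (by fun_prop) fun τ hτ ↦ ?_
        have hτ₀ : 0 < τ := (uIoc_of_le hT ▸ hτ).1
        refine (lintegral_enorm_heatKernel_mul_comp_mul_le
          (rpow_div_sub_one_div_pos hN ha hat₂ hτ₀) hp.le hφ hφC _).trans
          (ENNReal.ofReal_le_ofReal ?_)
        rw [mul_assoc _ (√a ^ (-p))]
        gcongr
        exact abs_rpow_neg_mul_sqrt_rpow_le hN₀ ha (ha.le.trans hat₂) hp.le τ
    _ ≤ ∫⁻ τ in Ioi 0, .ofReal (K * exp (-(p / 2 * log N) * τ)) :=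
        lintegral_mono_set (uIoc_of_le hT ▸ Ioc_subset_Ioi_self)
    _ = .ofReal (K / (p / 2 * log N)) :=
        lintegral_ofReal_const_mul_exp_neg_mul_Ioi (by positivity) (by positivity)

end Rescaling

lemma tendsto_average_of_norm_le {E : Type*} [NormedAddCommGroup E] [NormedSpace ℝ E]
    {F : ℝ → ℝ → E} {r : ℝ → ℝ} (t : ℝ) (hF : ∀ᶠ N in atTop, ∀ x, ‖F N x‖ ≤ r N)
    (hr : Tendsto r atTop (nhds 0)) :
    Tendsto (fun N ↦ (1 / N) • ∫ x in (0 : ℝ)..(N / t), F N x) atTop (nhds 0) := by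
  refine squeeze_zero_norm' ?_ (by simpa using hr.mul_const |t|⁻¹)
  filter_upwards [hF, eventually_gt_atTop 0] with N hFN hN
  calc ‖(1 / N) • ∫ x in (0 : ℝ)..(N / t), F N x‖
      ≤ 1 / N * (r N * |N / t - 0|) := by
        rw [norm_smul, norm_of_nonneg (by positivity)]
        gcongr
        exact intervalIntegral.norm_integral_le_of_norm_le_const fun x _ ↦ hFN x
    _ = r N * |t|⁻¹ := by
        rw [sub_zero, abs_div, abs_of_pos hN]
        field_simp

theorem stmt_2_general {a t₁ t₂ T p C : ℝ} {φ : ℝ → ℝ} (ha : 0 < a) (hat₁ : a ≤ t₁)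
    (hat₂ : a ≤ t₂) (hT : 0 ≤ T) (hp : 0 < p) (hφ : Measurable φ)
    (hφC : ∀ z, |φ z| ≤ C * |z| ^ p) :
    Tendsto (fun N : ℝ =>
      (1 / N) *
        ∫ x₁ in (0 : ℝ)..(N / t₁), ∫ x₂ in (0 : ℝ)..(N / t₂), ∫ τ in (0 : ℝ)..T, ∫ y : ℝ,
          heatKernel (N ^ τ / a - 1 / t₁) (y + x₂ - x₁) *
            heatKernel (N ^ τ / a - 1 / t₂) y * φ (N ^ (-τ) * y))
      atTop (nhds 0) := by
  refine tendsto_average_of_norm_le t₁ ?_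
    ((tendsto_log_atTop.const_mul_atTop (half_pos hp)).const_div_atTop
      (C * (∫ z, |z| ^ p ∂gaussianReal 0 1) * √a ^ (-p)))
  filter_upwards [eventually_gt_atTop 1] with N hN x₁
  exact norm_integral_heatKernel_rescaled_le hN ha hat₁ hat₂ hT hp hφ hφC _ x₁

theorem stmt_2 (t1 t2 : ℝ) (ht1 : 0 < t1) (ht2 : 0 < t2) :
    Tendsto (fun N : ℝ =>
      (1 / N) *
        ∫ x1 in (0:ℝ)..(N / t1), ∫ x2 in (0:ℝ)..(N / t2), ∫ τ in (0:ℝ)..2, ∫ y : ℝ,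
          heatKernel (N ^ τ / min t1 t2 - 1 / t1) (y + x2 - x1) *
            heatKernel (N ^ τ / min t1 t2 - 1 / t2) y *
              min 1 (|N ^ (-τ) * y| ^ ((1:ℝ)/2)))
      atTop (nhds 0) := by
  refine stmt_2_general (φ := fun z ↦ min 1 (|z| ^ ((1 : ℝ) / 2))) (C := 1) (lt_min ht1 ht2)
    (min_le_left _ _) (min_le_right _ _) zero_le_two one_half_pos (by fun_prop) fun z ↦ ?_
  rw [abs_of_nonneg (by positivity), one_mul]
  exact min_le_right _ _
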